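/- Let A be a packing bound function and let C be a compact subset of ℝ^n. Then the limit as r → ∞ of A(rC)/r^n exists and equals δ_{A,n} · L_n(C), where L_n is Lebesgue measure on ℝ^n. -/

import Mathlib

open scoped Pointwise
open MeasureTheory Bornology Filter

/-- The unit cube `[0,1]^n` in `ℝ^n`. -/
def unitCube (n : ℕ) : Set (EuclideanSpace ℝ (Fin n)) :=
  {x | ∀ i, x i ∈ Set.Icc (0 : ℝ) 1}

/-- A packing bound function: an assignment of a nonnegative real number to every bounded
Borel subset of every Euclidean space, satisfying the sphere bound, Lipschitz, union,
and mesh axioms. -/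
structure PackingBoundFunction where
  toFun : ∀ d : ℕ, Set (EuclideanSpace ℝ (Fin d)) → ℝ
  nonneg : ∀ (d : ℕ) (C : Set (EuclideanSpace ℝ (Fin d))),
    IsBounded C → MeasurableSet C → 0 ≤ toFun d C
  sphere_bound : ∀ (d : ℕ) (C : Set (EuclideanSpace ℝ (Fin d))),
    IsBounded C → MeasurableSet C → C.Nonempty →
    (∃ z, C ⊆ Metric.ball z 1) → toFun d C = 1
  lipschitz : ∀ (d d' : ℕ) (C : Set (EuclideanSpace ℝ (Fin d)))
    (C' : Set (EuclideanSpace ℝ (Fin d'))),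
    IsBounded C → MeasurableSet C → IsBounded C' → MeasurableSet C' →
    (∃ ψ : EuclideanSpace ℝ (Fin d) → EuclideanSpace ℝ (Fin d'),
      (∀ x ∈ C, ψ x ∈ C') ∧ ∀ x ∈ C, ∀ y ∈ C, dist x y ≤ dist (ψ x) (ψ y)) →
    toFun d C ≤ toFun d' C'
  union : ∀ (d : ℕ) (C C' : Set (EuclideanSpace ℝ (Fin d))),
    IsBounded C → MeasurableSet C → IsBounded C' → MeasurableSet C' →
    (∀ x ∈ C, ∀ x' ∈ C', 2 ≤ dist x x') →
    toFun d (C ∪ C') = toFun d C + toFun d C'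
  mesh : ∀ (ε : ℝ), 0 < ε → ∀ (d : ℕ) (C C' : Set (EuclideanSpace ℝ (Fin d))),
    IsBounded C → MeasurableSet C → IsBounded C' → MeasurableSet C' →
    C ⊆ Metric.thickening ε C' →
    toFun d ((1 / (1 + ε)) • C) ≤ toFun d C'

/-- The Euclidean limit `δ_{A,n}` of a packing bound function: the limit of
`A(2^k·[0,1]^n)/2^{kn}` as `k → ∞` (expressed as a `limsup`, which coincides with the
limit since the latter exists). -/
noncomputable def pbfDensity (A : PackingBoundFunction) (n : ℕ) : ℝ :=
  Filter.limsup (fun k : ℕ => A.toFun n ((2 : ℝ) ^ k • unitCube n) / 2 ^ (k * n)) Filter.atTop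

/-! Cut a set `S` along a grid of mesh `h`. Each piece can be translated into `[0,h]^n`, so
subadditivity bounds `A(S)` by `A([0,h]^n)/h^n` times the volume of a neighbourhood of `S`. For
dilates of a cube this shows that `δ_{A,n}` is the infimum of `A([0,h]^n)/h^n` over `h > 0`; for
dilates of `C` it gives `limsup A(rC)/r^n ≤ δ_{A,n} · vol(closure C)`.

For the lower bound fix `t > 0`, take a cube `Q ⊇ C`, and cover `rQ` by three sets: the part outside
the `rρ`-neighbourhood of `rC`, to which the upper bound applies; the collar between the
`t`-neighbourhood and the `rρ`-neighbourhood, which is negligible when `ρ` is small because the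
volume of the `ρ`-neighbourhood of `C` tends to that of the closure; and the `t`-neighbourhood
itself. Since `A(rQ)/r^n ≥ δ_{A,n} · vol(Q)`, the last set must carry `δ_{A,n} · vol(closure C)`,
and the mesh axiom bounds `A` there by its value on a slight dilate of `rC`. -/

section Thickening

variable {E : Type*} [NormedAddCommGroup E] [NormedSpace ℝ E]

lemma smul_thickening {c : ℝ} (hc : 0 < c) (t : ℝ) (S : Set E) :
    c • Metric.thickening t S = Metric.thickening (c * t) (c • S) := by
  rw [← add_ball_zero, smul_add, smul_ball hc.ne', smul_zero, Real.norm_of_nonneg hc.le,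
    add_ball_zero]

lemma thickening_sdiff_thickening_subset {X : Type*} [PseudoMetricSpace X] (t : ℝ) (S T : Set X) :
    Metric.thickening t (S \ Metric.thickening t T) ⊆ Metric.thickening t S \ closure T := by
  intro y hy
  refine ⟨Metric.thickening_subset_of_subset t Set.sdiff_subset hy, fun hyT => ?_⟩
  obtain ⟨x, ⟨-, hxT⟩, hyx⟩ := Metric.mem_thickening_iff.1 hy
  rw [← Metric.thickening_closure] at hxT
  exact hxT (Metric.mem_thickening_iff.2 ⟨y, hyT, by rwa [dist_comm]⟩)

lemma thickening_collar_smul_subset {r s t u : ℝ} (hr : 0 < r) (h : t + s ≤ r * u) (S : Set E) :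
    Metric.thickening t (Metric.thickening s (r • S) \ Metric.thickening t (r • S)) ⊆
      r • (Metric.thickening u S \ closure S) := by
  rw [Set.smul_set_sdiff₀ hr.ne', smul_thickening hr, ← closure_smul₀' hr.ne']
  exact (thickening_sdiff_thickening_subset t _ _).trans <| Set.sdiff_subset_sdiff_left <|
    (Metric.thickening_thickening_subset t s _).trans (Metric.thickening_mono h _)

lemma exists_forall_le_dist_add [Nontrivial E] {S : Set E} (hS : IsBounded S) (R : ℝ) :
    ∃ v : E, ∀ x ∈ S, ∀ y ∈ S, R ≤ dist x (y + v) := by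
  obtain ⟨v, hv⟩ := NormedSpace.exists_lt_norm ℝ E (R + Metric.diam S)
  refine ⟨v, fun x hx y hy => ?_⟩
  have hxy : dist y x ≤ Metric.diam S := Metric.dist_le_diam_of_mem hS hy hx
  have htri : dist y (y + v) ≤ dist y x + dist x (y + v) := dist_triangle _ _ _
  rw [dist_self_add_right] at htri
  linarith

variable [FiniteDimensional ℝ E] [MeasurableSpace E] [BorelSpace E]
  (μ : Measure E) [μ.IsAddHaarMeasure]

lemma measureReal_smul_of_nonneg {c : ℝ} (hc : 0 ≤ c) (S : Set E) :
    μ.real (c • S) = c ^ Module.finrank ℝ E * μ.real S := by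
  rw [measureReal_def, Measure.addHaar_smul_of_nonneg μ hc, ENNReal.toReal_mul,
    ENNReal.toReal_ofReal (by positivity), measureReal_def]

lemma tendsto_measureReal_thickening {S : Set E} (hS : IsBounded S) :
    Tendsto (fun t => μ.real (Metric.thickening t S)) (nhdsWithin 0 (Set.Ioi 0))
      (nhds (μ.real (closure S))) :=
  (ENNReal.tendsto_toReal hS.closure.measure_lt_top.ne).comp
    (tendsto_measure_thickening ⟨1, one_pos, hS.thickening.measure_lt_top.ne⟩)

lemma tendsto_measureReal_thickening_smul_div {S : Set E} (hS : IsBounded S) {t : ℝ}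
    (ht : 0 < t) :
    Tendsto (fun r : ℝ => μ.real (Metric.thickening t (r • S)) / r ^ Module.finrank ℝ E) atTop
      (nhds (μ.real (closure S))) := by
  have hdiv : Tendsto (fun r : ℝ => t / r) atTop (nhdsWithin 0 (Set.Ioi 0)) :=
    tendsto_nhdsWithin_iff.2 ⟨tendsto_const_nhds.div_atTop tendsto_id,
      (eventually_gt_atTop 0).mono fun _ hr => div_pos ht hr⟩
  refine ((tendsto_measureReal_thickening μ hS).comp hdiv).congr' ?_
  filter_upwards [eventually_gt_atTop 0] with r hr
  rw [Function.comp_apply, eq_div_iff (pow_pos hr _).ne', mul_comm,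
    ← measureReal_smul_of_nonneg μ hr.le, smul_thickening hr, mul_div_cancel₀ t hr.ne']

end Thickening

section Cubes

variable {n : ℕ}

lemma unitCube_eq_preimage_Icc (n : ℕ) : unitCube n = WithLp.ofLp ⁻¹' Set.Icc 0 1 := by
  ext x
  simp only [unitCube, Set.mem_ofPred_eq, Set.mem_preimage, Set.mem_Icc, Pi.le_def, ← forall_and,
    Pi.zero_apply, Pi.one_apply]

lemma mem_smul_unitCube {h : ℝ} (hh : 0 < h) (x : EuclideanSpace ℝ (Fin n)) :
    x ∈ h • unitCube n ↔ ∀ i, 0 ≤ x i ∧ x i ≤ h := by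
  rw [Set.mem_smul_set_iff_inv_smul_mem₀ hh.ne']
  refine forall_congr' fun i => ?_
  rw [PiLp.smul_apply, smul_eq_mul, Set.mem_Icc, inv_mul_le_iff₀ hh, mul_one,
    mul_nonneg_iff_of_pos_left (inv_pos.2 hh)]

lemma isCompact_smul_unitCube (n : ℕ) (h : ℝ) : IsCompact (h • unitCube n) := by
  refine IsCompact.smul h ?_
  rw [unitCube_eq_preimage_Icc]
  exact (PiLp.homeomorph 2 _).isCompact_preimage.2 isCompact_Icc

lemma volumeReal_smul_unitCube {h : ℝ} (hh : 0 ≤ h) : volume.real (h • unitCube n) = h ^ n := by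
  have hone : volume (unitCube n) = 1 := by
    rw [unitCube_eq_preimage_Icc, (PiLp.volume_preserving_ofLp (Fin n)).measure_preimage
      measurableSet_Icc.nullMeasurableSet, Real.volume_Icc_pi]
    simp
  rw [measureReal_smul_of_nonneg volume hh, measureReal_def, hone, ENNReal.toReal_one, mul_one,
    finrank_euclideanSpace_fin]

lemma exists_subset_vadd_smul_unitCube {S : Set (EuclideanSpace ℝ (Fin n))} (hS : IsBounded S) :
    ∃ v : EuclideanSpace ℝ (Fin n), ∃ s : ℝ, 0 < s ∧ S ⊆ v +ᵥ s • unitCube n := by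
  obtain ⟨R, hR, hSR⟩ := hS.exists_pos_norm_le
  refine ⟨WithLp.toLp 2 fun _ => -R, 2 * R, by positivity, fun x hx => ?_⟩
  rw [Set.mem_vadd_set_iff_neg_vadd_mem, mem_smul_unitCube (by positivity)]
  intro i
  have hxi : |x i| ≤ R := (PiLp.norm_apply_le x i).trans (hSR x hx)
  obtain ⟨hlo, hhi⟩ := abs_le.1 hxi
  simp only [vadd_eq_add, PiLp.add_apply, PiLp.neg_apply, neg_neg]
  constructor <;> linarith

end Cubes

section Grid

variable {ι : Type*}

/-- The index of the cell of the grid of mesh `h` that contains `x`. The cells themselves are the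
fibres of this map: for `h > 0` they are half-open cubes of side `h`. -/
noncomputable def gridIndex (h : ℝ) (x : EuclideanSpace ℝ ι) : ι → ℤ :=
  fun i => ⌊x i / h⌋

lemma preimage_gridIndex_singleton {h : ℝ} (hh : 0 < h) (z : ι → ℤ) :
    gridIndex h ⁻¹' {z} =
      WithLp.ofLp ⁻¹' Set.univ.pi fun i => Set.Ico (h * z i) (h * (z i + 1)) := by
  ext x
  simp only [Set.mem_preimage, Set.mem_singleton_iff, funext_iff, gridIndex, Int.floor_eq_iff,
    le_div_iff₀' hh, div_lt_iff₀' hh, Set.mem_pi, Set.mem_univ, forall_true_left, Set.mem_Ico]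

lemma measurable_gridIndex [Finite ι] (h : ℝ) : Measurable (gridIndex (ι := ι) h) := by
  refine measurable_pi_lambda _ fun i => Measurable.floor ?_
  fun_prop

lemma finite_image_gridIndex [Finite ι] {h : ℝ} (hh : 0 < h) {S : Set (EuclideanSpace ℝ ι)}
    (hS : IsBounded S) : (gridIndex h '' S).Finite := by
  have := Fintype.ofFinite ι
  obtain ⟨R, hR⟩ := hS.exists_norm_le
  refine (Set.Finite.pi' fun _ => Set.finite_Icc ⌊-R / h⌋ ⌊R / h⌋).subset ?_
  rintro _ ⟨x, hx, rfl⟩ i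
  obtain ⟨hlo, hhi⟩ := abs_le.1 ((PiLp.norm_apply_le x i).trans (hR x hx))
  exact ⟨Int.floor_le_floor (by gcongr), Int.floor_le_floor (by gcongr)⟩

variable [Fintype ι]

lemma volumeReal_preimage_gridIndex {h : ℝ} (hh : 0 < h) (z : ι → ℤ) :
    volume.real (gridIndex (ι := ι) h ⁻¹' {z}) = h ^ Fintype.card ι := by
  have hside (i : ι) : h * ((z i : ℝ) + 1) - h * z i = h := by ring
  rw [preimage_gridIndex_singleton hh, measureReal_def,
    (PiLp.volume_preserving_ofLp ι).measure_preimage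
      (MeasurableSet.univ_pi fun _ => measurableSet_Ico).nullMeasurableSet,
    Real.volume_pi_Ico_toReal fun i => by linarith [hside i]]
  simp only [hside, Finset.prod_const, Finset.card_univ]

lemma dist_le_sqrt_card_mul {h : ℝ} (hh : 0 ≤ h) {x y : EuclideanSpace ℝ ι}
    (hxy : ∀ i, dist (x i) (y i) ≤ h) : dist x y ≤ √(Fintype.card ι) * h := by
  calc dist x y = √(∑ i, dist (x i) (y i) ^ 2) := EuclideanSpace.dist_eq x y
    _ ≤ √(∑ _i : ι, h ^ 2) := by gcongr with i; exact hxy i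
    _ = √(Fintype.card ι) * h := by
      rw [Finset.sum_const, Finset.card_univ, nsmul_eq_mul, Real.sqrt_mul (Nat.cast_nonneg _),
        Real.sqrt_sq hh]

lemma dist_le_of_gridIndex_eq {h : ℝ} (hh : 0 < h) {x y : EuclideanSpace ℝ ι}
    (hxy : gridIndex h x = gridIndex h y) : dist x y ≤ √(Fintype.card ι) * h := by
  refine dist_le_sqrt_card_mul hh.le fun i => ?_
  have hlt := Int.abs_sub_lt_one_of_floor_eq_floor (congrFun hxy i)
  rw [← sub_div, abs_div, abs_of_pos hh, div_lt_one hh] at hlt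
  exact hlt.le

lemma card_mul_pow_le_volumeReal_thickening {h t : ℝ} (hh : 0 < h)
    (ht : √(Fintype.card ι) * h < t) {S : Set (EuclideanSpace ℝ ι)} (hS : IsBounded S)
    {T : Finset (ι → ℤ)} (hT : ↑T ⊆ gridIndex h '' S) :
    T.card * h ^ Fintype.card ι ≤ volume.real (Metric.thickening t S) := by
  have hsub : ⋃ z ∈ T, gridIndex h ⁻¹' {z} ⊆ Metric.thickening t S := by
    refine Set.iUnion₂_subset fun z hz x hx => ?_
    obtain ⟨y, hy, rfl⟩ := hT hz
    exact Metric.mem_thickening_iff.2 ⟨y, hy, (dist_le_of_gridIndex_eq hh hx).trans_lt ht⟩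
  have hdisj : (T : Set (ι → ℤ)).PairwiseDisjoint fun z => gridIndex h ⁻¹' {z} :=
    fun z _ w _ hzw => (Set.disjoint_singleton.2 hzw).preimage _
  calc T.card * h ^ Fintype.card ι = ∑ z ∈ T, volume.real (gridIndex (ι := ι) h ⁻¹' {z}) := by
        simp only [volumeReal_preimage_gridIndex hh, Finset.sum_const, nsmul_eq_mul]
    _ = volume.real (⋃ z ∈ T, gridIndex (ι := ι) h ⁻¹' {z}) :=
        (measureReal_biUnion_finset hdisj
          (fun z _ => measurable_gridIndex h (measurableSet_singleton z))
          fun z hz => (hS.thickening.subset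
            ((Set.subset_biUnion_of_mem hz).trans hsub)).measure_lt_top.ne).symm
    _ ≤ volume.real (Metric.thickening t S) :=
        measureReal_mono hsub hS.thickening.measure_lt_top.ne

end Grid

namespace PackingBoundFunction

section Subadditivity

variable (A : PackingBoundFunction) {n : ℕ} {C C' : Set (EuclideanSpace ℝ (Fin n))}

lemma toFun_le_of_forall_add_mem (hC : IsBounded C) (hCm : MeasurableSet C) (hC' : IsBounded C')
    (hCm' : MeasurableSet C') (v : EuclideanSpace ℝ (Fin n)) (hv : ∀ x ∈ C, x + v ∈ C') :
    A.toFun n C ≤ A.toFun n C' :=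
  A.lipschitz n n C C' hC hCm hC' hCm'
    ⟨(· + v), hv, fun x _ y _ => (dist_add_right x y v).ge⟩

lemma toFun_mono (h : C ⊆ C') (hCm : MeasurableSet C) (hC' : IsBounded C')
    (hCm' : MeasurableSet C') : A.toFun n C ≤ A.toFun n C' :=
  A.toFun_le_of_forall_add_mem (hC'.subset h) hCm hC' hCm' 0 fun x hx => by simpa using h hx

lemma toFun_empty (n : ℕ) : A.toFun n ∅ = 0 := by
  have h := A.union n ∅ ∅ isBounded_empty .empty isBounded_empty .empty (by simp)
  rwa [Set.union_self, left_eq_add] at h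

lemma toFun_union_le_of_forall_le_dist_add (hC : IsBounded C) (hCm : MeasurableSet C)
    (hC' : IsBounded C') (hCm' : MeasurableSet C') {v : EuclideanSpace ℝ (Fin n)}
    (htwo : ∀ x ∈ C, ∀ y ∈ C', 2 ≤ dist x (y + v))
    (hdist : ∀ x ∈ C, ∀ y ∈ C', dist x y ≤ dist x (y + v)) :
    A.toFun n (C ∪ C') ≤ A.toFun n C + A.toFun n C' := by
  classical
  set C'v := v +ᵥ C'
  have hmem {y} (hy : y ∈ C') : y + v ∈ C'v := ⟨y, hy, add_comm v y⟩
  have hb : IsBounded C'v := hC'.vadd v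
  have hm : MeasurableSet C'v := hCm'.const_vadd v
  have hspread : A.toFun n (C ∪ C') ≤ A.toFun n (C ∪ C'v) := by
    refine A.lipschitz n n _ _ (hC.union hC') (hCm.union hCm') (hC.union hb) (hCm.union hm)
      ⟨fun x => if x ∈ C then x else x + v, fun x hx => ?_, fun x hx y hy => ?_⟩
    · dsimp only
      split_ifs with hxC
      exacts [.inl hxC, .inr (hmem (hx.resolve_left hxC))]
    · dsimp only
      split_ifs with hxC hyC hyC
      · exact le_rfl
      · exact hdist x hxC y (hy.resolve_left hyC)
      · rw [dist_comm x, dist_comm (x + v)]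
        exact hdist y hyC x (hx.resolve_left hxC)
      · exact (dist_add_right x y v).ge
  calc A.toFun n (C ∪ C') ≤ A.toFun n (C ∪ C'v) := hspread
    _ = A.toFun n C + A.toFun n C'v := A.union n C C'v hC hCm hb hm <| by
        rintro x hx _ ⟨y, hy, rfl⟩
        simpa [add_comm] using htwo x hx y hy
    _ ≤ A.toFun n C + A.toFun n C' := by
        gcongr
        refine A.toFun_le_of_forall_add_mem hb hm hC' hCm' (-v) ?_
        rintro _ ⟨y, hy, rfl⟩
        simpa using hy

lemma toFun_union_le (hC : IsBounded C) (hCm : MeasurableSet C) (hC' : IsBounded C')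
    (hCm' : MeasurableSet C') : A.toFun n (C ∪ C') ≤ A.toFun n C + A.toFun n C' := by
  rcases C.eq_empty_or_nonempty with rfl | ⟨x₀, hx₀⟩
  · rw [Set.empty_union, A.toFun_empty, zero_add]
  rcases subsingleton_or_nontrivial (EuclideanSpace ℝ (Fin n)) with _ | _
  · rw [Set.union_eq_left.2 fun x _ => Subsingleton.elim x₀ x ▸ hx₀]
    exact le_add_of_nonneg_right (A.nonneg n C' hC' hCm')
  · have hU := hC.union hC'
    obtain ⟨v, hv⟩ := exists_forall_le_dist_add hU (max 2 (Metric.diam (C ∪ C')))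
    refine A.toFun_union_le_of_forall_le_dist_add (v := v) hC hCm hC' hCm'
      (fun x hx y hy => (le_max_left _ _).trans (hv x (.inl hx) y (.inr hy)))
      fun x hx y hy => ?_
    exact (Metric.dist_le_diam_of_mem hU (.inl hx) (.inr hy)).trans
      ((le_max_right _ _).trans (hv x (.inl hx) y (.inr hy)))

lemma toFun_le_sdiff_add (hC : IsBounded C) (hCm : MeasurableSet C) (hC' : IsBounded C')
    (hCm' : MeasurableSet C') : A.toFun n C ≤ A.toFun n (C \ C') + A.toFun n C' := by
  have hb : IsBounded (C \ C') := hC.subset Set.sdiff_subset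
  have hm : MeasurableSet (C \ C') := hCm.diff hCm'
  exact (A.toFun_mono (Set.subset_sdiff_union C C') hCm (hb.union hC') (hm.union hCm')).trans
    (A.toFun_union_le hb hm hC' hCm')

lemma toFun_biUnion_finset_le {ι : Type*} (T : Finset ι) (f : ι → Set (EuclideanSpace ℝ (Fin n)))
    (hf : ∀ i ∈ T, IsBounded (f i)) (hfm : ∀ i ∈ T, MeasurableSet (f i)) :
    A.toFun n (⋃ i ∈ T, f i) ≤ ∑ i ∈ T, A.toFun n (f i) := by
  classical
  induction T using Finset.induction_on with
  | empty => simp [A.toFun_empty]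
  | insert a T ha ih =>
    rw [Finset.forall_mem_insert] at hf hfm
    rw [Finset.set_biUnion_insert, Finset.sum_insert ha]
    calc A.toFun n (f a ∪ ⋃ i ∈ T, f i) ≤ A.toFun n (f a) + A.toFun n (⋃ i ∈ T, f i) :=
          A.toFun_union_le hf.1 hfm.1 ((isBounded_biUnion_finset T).2 hf.2)
            (Finset.measurableSet_biUnion T hfm.2)
      _ ≤ A.toFun n (f a) + ∑ i ∈ T, A.toFun n (f i) := by gcongr; exact ih hf.2 hfm.2

lemma toFun_thickening_le (hC : IsBounded C) (hCm : MeasurableSet C) {ε : ℝ} (hε : 0 < ε) :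
    A.toFun n (Metric.thickening (ε / (1 + ε)) C) ≤ A.toFun n ((1 + ε) • C) := by
  have hpos : 0 < 1 + ε := by positivity
  have h := A.mesh ε hε n (Metric.thickening ε ((1 + ε) • C)) ((1 + ε) • C)
    (hC.smul₀ _).thickening Metric.isOpen_thickening.measurableSet (hC.smul₀ _)
    (hCm.const_smul₀ _) subset_rfl
  rwa [smul_thickening (one_div_pos.2 hpos), smul_smul, one_div_mul_cancel hpos.ne', one_smul,
    one_div_mul_eq_div] at h

end Subadditivity

section Density

variable (A : PackingBoundFunction) {n : ℕ} {C : Set (EuclideanSpace ℝ (Fin n))}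

/-- The value `A([0,h]^n)/h^n` of `A` on the cube of side `h`, per unit of volume. The density
`δ_{A,n}` is both its limit as `h → ∞` and its infimum over `h > 0`. -/
noncomputable def cubeDensity (n : ℕ) (h : ℝ) : ℝ :=
  A.toFun n (h • unitCube n) / h ^ n

lemma cubeDensity_nonneg (n : ℕ) {h : ℝ} (hh : 0 < h) : 0 ≤ A.cubeDensity n h :=
  div_nonneg (A.nonneg n _ (isCompact_smul_unitCube n h).isBounded
    (isCompact_smul_unitCube n h).measurableSet) (pow_pos hh n).le

lemma toFun_le_card_mul (hC : IsBounded C) (hCm : MeasurableSet C) {h : ℝ} (hh : 0 < h)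
    {T : Finset (Fin n → ℤ)} (hT : gridIndex h '' C ⊆ T) :
    A.toFun n C ≤ T.card * A.toFun n (h • unitCube n) := by
  have hcover : C = ⋃ z ∈ T, C ∩ gridIndex h ⁻¹' {z} := by
    rw [← Set.inter_iUnion₂, eq_comm, Set.inter_eq_left]
    exact fun x hx => Set.mem_biUnion (hT ⟨x, hx, rfl⟩) rfl
  have hb (z : Fin n → ℤ) : IsBounded (C ∩ gridIndex h ⁻¹' {z}) := hC.subset Set.inter_subset_left
  have hm (z : Fin n → ℤ) : MeasurableSet (C ∩ gridIndex h ⁻¹' {z}) :=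
    hCm.inter (measurable_gridIndex h (measurableSet_singleton z))
  have hcell (z : Fin n → ℤ) :
      A.toFun n (C ∩ gridIndex h ⁻¹' {z}) ≤ A.toFun n (h • unitCube n) := by
    refine A.toFun_le_of_forall_add_mem (hb z) (hm z) (isCompact_smul_unitCube n h).isBounded
      (isCompact_smul_unitCube n h).measurableSet (WithLp.toLp 2 fun i => -(h * z i)) ?_
    rintro x ⟨-, hxz⟩
    rw [preimage_gridIndex_singleton hh] at hxz
    rw [mem_smul_unitCube hh]
    intro i
    obtain ⟨hlo, hhi⟩ := Set.mem_Ico.1 (hxz i trivial)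
    rw [PiLp.add_apply]
    constructor <;> linarith
  calc A.toFun n C = A.toFun n (⋃ z ∈ T, C ∩ gridIndex h ⁻¹' {z}) := by rw [← hcover]
    _ ≤ ∑ z ∈ T, A.toFun n (C ∩ gridIndex h ⁻¹' {z}) :=
        A.toFun_biUnion_finset_le T _ (fun z _ => hb z) fun z _ => hm z
    _ ≤ T.card * A.toFun n (h • unitCube n) := by
        rw [← nsmul_eq_mul]
        exact Finset.sum_le_card_nsmul _ _ _ fun z _ => hcell z

lemma toFun_le_cubeDensity_mul (hC : IsBounded C) (hCm : MeasurableSet C) {h t : ℝ}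
    (hh : 0 < h) (ht : √n * h < t) :
    A.toFun n C ≤ A.cubeDensity n h * volume.real (Metric.thickening t C) := by
  have hfin := finite_image_gridIndex hh hC
  have hcard := card_mul_pow_le_volumeReal_thickening hh (by rwa [Fintype.card_fin]) hC
    hfin.coe_toFinset.subset
  rw [Fintype.card_fin] at hcard
  calc A.toFun n C ≤ hfin.toFinset.card * A.toFun n (h • unitCube n) :=
        A.toFun_le_card_mul hC hCm hh hfin.coe_toFinset.superset
    _ = A.cubeDensity n h * (hfin.toFinset.card * h ^ n) := by rw [cubeDensity]; field_simp
    _ ≤ A.cubeDensity n h * volume.real (Metric.thickening t C) := by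
        gcongr
        exact A.cubeDensity_nonneg n hh

lemma eventually_smul_div_lt_of_cubeDensity_mul_lt (hC : IsBounded C) (hCm : MeasurableSet C)
    {h c : ℝ} (hh : 0 < h) (hc : A.cubeDensity n h * volume.real (closure C) < c) :
    ∀ᶠ r : ℝ in atTop, A.toFun n (r • C) / r ^ n < c := by
  have hlim := (tendsto_measureReal_thickening_smul_div volume hC
    (show 0 < √n * h + 1 by positivity)).const_mul (A.cubeDensity n h)
  rw [finrank_euclideanSpace_fin] at hlim
  filter_upwards [hlim.eventually_lt_const hc, eventually_gt_atTop 0] with r hr hr0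
  refine lt_of_le_of_lt ?_ hr
  rw [← mul_div_assoc]
  gcongr
  exact A.toFun_le_cubeDensity_mul (hC.smul₀ r) (hCm.const_smul₀ r) hh (lt_add_one _)

lemma bddBelow_image_cubeDensity (n : ℕ) : BddBelow (A.cubeDensity n '' Set.Ioi 0) :=
  ⟨0, Set.forall_mem_image.2 fun _ hh => A.cubeDensity_nonneg n hh⟩

lemma tendsto_cubeDensity_sInf (n : ℕ) :
    Tendsto (A.cubeDensity n) atTop (nhds (sInf (A.cubeDensity n '' Set.Ioi 0))) := by
  refine tendsto_order.2 ⟨fun c hc => ?_, fun c hc => ?_⟩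
  · filter_upwards [eventually_gt_atTop 0] with h hh
    exact hc.trans_le (csInf_le (A.bddBelow_image_cubeDensity n) (Set.mem_image_of_mem _ hh))
  · obtain ⟨_, ⟨h, hh, rfl⟩, hlt⟩ := exists_lt_of_csInf_lt (Set.nonempty_Ioi.image _) hc
    have hcube := isCompact_smul_unitCube n 1
    have hvol : volume.real (closure ((1 : ℝ) • unitCube n)) = 1 := by
      rw [hcube.isClosed.closure_eq, volumeReal_smul_unitCube zero_le_one, one_pow]
    simpa only [one_smul, cubeDensity] using
      A.eventually_smul_div_lt_of_cubeDensity_mul_lt hcube.isBounded hcube.measurableSet hh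
        (by rwa [hvol, mul_one])

lemma pbfDensity_eq_sInf (n : ℕ) :
    pbfDensity A n = sInf (A.cubeDensity n '' Set.Ioi 0) := by
  have hpow : Tendsto (fun k : ℕ => (2 : ℝ) ^ k) atTop atTop :=
    tendsto_pow_atTop_atTop_of_one_lt one_lt_two
  simpa only [pbfDensity, pow_mul, Function.comp_def, cubeDensity] using
    ((A.tendsto_cubeDensity_sInf n).comp hpow).limsup_eq

lemma tendsto_cubeDensity (n : ℕ) :
    Tendsto (A.cubeDensity n) atTop (nhds (pbfDensity A n)) :=
  A.pbfDensity_eq_sInf n ▸ A.tendsto_cubeDensity_sInf n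

lemma pbfDensity_nonneg (n : ℕ) : 0 ≤ pbfDensity A n :=
  ge_of_tendsto (A.tendsto_cubeDensity n) <|
    (eventually_gt_atTop 0).mono fun _ hh => A.cubeDensity_nonneg n hh

lemma pbfDensity_le_cubeDensity (n : ℕ) {h : ℝ} (hh : 0 < h) :
    pbfDensity A n ≤ A.cubeDensity n h := by
  rw [pbfDensity_eq_sInf]
  exact csInf_le (A.bddBelow_image_cubeDensity n) (Set.mem_image_of_mem _ hh)

lemma eventually_smul_div_lt_of_pbfDensity_mul_lt (hC : IsBounded C) (hCm : MeasurableSet C) {c : ℝ}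
    (hc : pbfDensity A n * volume.real (closure C) < c) :
    ∀ᶠ r : ℝ in atTop, A.toFun n (r • C) / r ^ n < c := by
  have hlim := (A.tendsto_cubeDensity n).mul_const (volume.real (closure C))
  obtain ⟨h, hlt, hh⟩ := ((hlim.eventually_lt_const hc).and (eventually_gt_atTop 0)).exists
  exact A.eventually_smul_div_lt_of_cubeDensity_mul_lt hC hCm hh hlt

lemma pbfDensity_mul_pow_le_smul_vadd_smul_unitCube_div (v : EuclideanSpace ℝ (Fin n)) {s r : ℝ}
    (hs : 0 < s) (hr : 0 < r) :
    pbfDensity A n * s ^ n ≤ A.toFun n (r • (v +ᵥ s • unitCube n)) / r ^ n := by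
  have hQ := ((isCompact_smul_unitCube n s).vadd v).smul r
  have hcube := isCompact_smul_unitCube n (r * s)
  calc pbfDensity A n * s ^ n ≤ A.cubeDensity n (r * s) * s ^ n := by
        gcongr
        exact A.pbfDensity_le_cubeDensity n (mul_pos hr hs)
    _ = A.toFun n ((r * s) • unitCube n) / r ^ n := by
        rw [cubeDensity, mul_pow]; field_simp
    _ ≤ A.toFun n (r • (v +ᵥ s • unitCube n)) / r ^ n := by
        gcongr
        refine A.toFun_le_of_forall_add_mem hcube.isBounded hcube.measurableSet hQ.isBounded
          hQ.measurableSet (r • v) ?_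
        rintro _ ⟨x, hx, rfl⟩
        refine ⟨v + s • x, ⟨s • x, ⟨x, hx, rfl⟩, rfl⟩, ?_⟩
        simp only [smul_add, smul_smul, add_comm]

end Density

section LowerBound

variable (A : PackingBoundFunction) {n : ℕ} {C : Set (EuclideanSpace ℝ (Fin n))}

lemma exists_eventually_collar_div_lt (hC : IsBounded C) {t η : ℝ} (ht : 0 < t) (hη : 0 < η) :
    ∃ ρ > 0, ∀ᶠ r : ℝ in atTop,
      A.toFun n (Metric.thickening (r * ρ) (r • C) \ Metric.thickening t (r • C)) / r ^ n < η := by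
  set h : ℝ := t / (√n + 1)
  have hh : 0 < h := by positivity
  have hht : √n * h < t := by
    rw [← mul_div_assoc, div_lt_iff₀ (by positivity)]
    linarith
  have hlim := ((tendsto_measureReal_thickening volume hC).sub_const
    (volume.real (closure C))).const_mul (A.cubeDensity n h)
  rw [sub_self, mul_zero] at hlim
  obtain ⟨σ, hση, hσ : 0 < σ⟩ := ((hlim.eventually_lt_const hη).and self_mem_nhdsWithin).exists
  rw [← measureReal_sdiff (Metric.closure_subset_thickening hσ C) isClosed_closure.measurableSet
    hC.thickening.measure_lt_top.ne] at hση
  refine ⟨σ / 2, half_pos hσ, ?_⟩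
  filter_upwards [eventually_gt_atTop 0, eventually_ge_atTop (t / (σ / 2))] with r hr hrt
  rw [div_le_iff₀ (half_pos hσ)] at hrt
  set F := Metric.thickening (r * (σ / 2)) (r • C) \ Metric.thickening t (r • C)
  have hFb : IsBounded F := (hC.smul₀ r).thickening.subset Set.sdiff_subset
  have hFm : MeasurableSet F := Metric.isOpen_thickening.measurableSet.diff
    Metric.isOpen_thickening.measurableSet
  have hFsub : Metric.thickening t F ⊆ r • (Metric.thickening σ C \ closure C) :=
    thickening_collar_smul_subset hr (by linarith) C
  refine lt_of_le_of_lt ((div_le_iff₀' (pow_pos hr n)).2 ?_) hση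
  calc A.toFun n F ≤ A.cubeDensity n h * volume.real (Metric.thickening t F) :=
        A.toFun_le_cubeDensity_mul hFb hFm hh hht
    _ ≤ A.cubeDensity n h * volume.real (r • (Metric.thickening σ C \ closure C)) :=
        mul_le_mul_of_nonneg_left (measureReal_mono hFsub
          ((hC.thickening.subset Set.sdiff_subset).smul₀ r).measure_lt_top.ne)
          (A.cubeDensity_nonneg n hh)
    _ = r ^ n * (A.cubeDensity n h * volume.real (Metric.thickening σ C \ closure C)) := by
        rw [measureReal_smul_of_nonneg volume hr.le, finrank_euclideanSpace_fin, mul_left_comm]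

lemma eventually_smul_sdiff_thickening_div_lt {Q : Set (EuclideanSpace ℝ (Fin n))}
    (hQ : IsCompact Q) (hCQ : C ⊆ Q) {ρ c : ℝ} (hρ : 0 < ρ)
    (hc : pbfDensity A n * (volume.real Q - volume.real (closure C)) < c) :
    ∀ᶠ r : ℝ in atTop, A.toFun n (r • (Q \ Metric.thickening ρ C)) / r ^ n < c := by
  have hD : IsCompact (Q \ Metric.thickening ρ C) := hQ.diff Metric.isOpen_thickening
  refine A.eventually_smul_div_lt_of_pbfDensity_mul_lt hD.isBounded hD.measurableSet
    (lt_of_le_of_lt ?_ hc)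
  rw [hD.isClosed.closure_eq, ← measureReal_sdiff (closure_minimal hCQ hQ.isClosed)
    isClosed_closure.measurableSet hQ.measure_lt_top.ne]
  exact mul_le_mul_of_nonneg_left (measureReal_mono
    (Set.sdiff_subset_sdiff_right (Metric.closure_subset_thickening hρ C))
    (hQ.isBounded.subset Set.sdiff_subset).measure_lt_top.ne) (A.pbfDensity_nonneg n)

lemma eventually_lt_thickening_smul_div (hC : IsBounded C) {t c : ℝ} (ht : 0 < t)
    (hc : c < pbfDensity A n * volume.real (closure C)) :
    ∀ᶠ r : ℝ in atTop, c < A.toFun n (Metric.thickening t (r • C)) / r ^ n := by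
  obtain ⟨v, s, hs, hCQ⟩ := exists_subset_vadd_smul_unitCube hC
  set Q := v +ᵥ s • unitCube n
  have hQ : IsCompact Q := (isCompact_smul_unitCube n s).vadd v
  have hQvol : volume.real Q = s ^ n := by
    rw [measureReal_def, measure_vadd, ← measureReal_def, volumeReal_smul_unitCube hs.le]
  set η : ℝ := (pbfDensity A n * volume.real (closure C) - c) / 2 with hη
  have hη0 : 0 < η := half_pos (sub_pos.2 hc)
  obtain ⟨ρ, hρ, hcollar⟩ := A.exists_eventually_collar_div_lt hC ht hη0
  have houter := A.eventually_smul_sdiff_thickening_div_lt hQ hCQ hρ (lt_add_of_pos_right _ hη0)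
  filter_upwards [hcollar, houter, eventually_gt_atTop 0] with r hFr hDr hr
  rw [hQvol] at hDr
  rw [Set.smul_set_sdiff₀ hr.ne', smul_thickening hr] at hDr
  have hrC : IsBounded (r • C) := hC.smul₀ r
  set N := Metric.thickening (r * ρ) (r • C)
  set P := Metric.thickening t (r • C)
  have hNm : MeasurableSet N := Metric.isOpen_thickening.measurableSet
  have hcover : A.toFun n (r • Q) ≤ A.toFun n (r • Q \ N) + (A.toFun n (N \ P) + A.toFun n P) :=
    (A.toFun_le_sdiff_add (hQ.smul r).isBounded (hQ.smul r).measurableSet hrC.thickening hNm).trans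
      (add_le_add_right (A.toFun_le_sdiff_add hrC.thickening hNm hrC.thickening
        Metric.isOpen_thickening.measurableSet) _)
  have hdiv : pbfDensity A n * s ^ n ≤
      A.toFun n (r • Q \ N) / r ^ n + (A.toFun n (N \ P) / r ^ n + A.toFun n P / r ^ n) := by
    rw [← add_div, ← add_div]
    exact (A.pbfDensity_mul_pow_le_smul_vadd_smul_unitCube_div v hs hr).trans (by gcongr)
  linarith

lemma eventually_lt_smul_div_of_lt_pbfDensity_mul (hC : IsBounded C) (hCm : MeasurableSet C) {c : ℝ}
    (hc : c < pbfDensity A n * volume.real (closure C)) :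
    ∀ᶠ r : ℝ in atTop, c < A.toFun n (r • C) / r ^ n := by
  have hcont : Tendsto (fun ε : ℝ => c * (1 + ε) ^ n) (nhdsWithin 0 (Set.Ioi 0)) (nhds c) := by
    refine tendsto_nhdsWithin_of_tendsto_nhds (Continuous.tendsto' (by fun_prop) _ _ ?_)
    rw [add_zero, one_pow, mul_one]
  obtain ⟨ε, hcε, hε : 0 < ε⟩ := ((hcont.eventually_lt_const hc).and self_mem_nhdsWithin).exists
  have hpos : 0 < 1 + ε := by positivity
  have hscale : Tendsto (fun r : ℝ => r / (1 + ε)) atTop atTop := tendsto_id.atTop_div_const hpos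
  filter_upwards [hscale.eventually (A.eventually_lt_thickening_smul_div hC (div_pos hε hpos) hcε),
    eventually_gt_atTop 0] with r hr hr0
  have hmesh := A.toFun_thickening_le (hC.smul₀ (r / (1 + ε))) (hCm.const_smul₀ _) hε
  rw [smul_smul, mul_div_cancel₀ r hpos.ne'] at hmesh
  rw [div_pow, div_div_eq_mul_div, lt_div_iff₀ (pow_pos hr0 n), mul_right_comm,
    mul_lt_mul_iff_left₀ (pow_pos hpos n)] at hr
  exact (lt_div_iff₀ (pow_pos hr0 n)).2 (hr.trans_le hmesh)

end LowerBound

end PackingBoundFunction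

theorem packingBoundFunction_compact_limit_general (A : PackingBoundFunction) (n : ℕ)
    (C : Set (EuclideanSpace ℝ (Fin n))) (hC : IsBounded C) (hCm : MeasurableSet C) :
    Tendsto (fun r : ℝ => A.toFun n (r • C) / r ^ n) atTop
      (nhds (pbfDensity A n * (volume (closure C)).toReal)) :=
  tendsto_order.2 ⟨fun _ hc => A.eventually_lt_smul_div_of_lt_pbfDensity_mul hC hCm hc,
    fun _ hc => A.eventually_smul_div_lt_of_pbfDensity_mul_lt hC hCm hc⟩

/-- For a packing bound function `A` and a compact `C ⊆ ℝ^n`, the limit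
of `A(rC)/r^n` as `r → ∞` exists and equals `δ_{A,n} · L_n(C)`. -/
theorem packingBoundFunction_compact_limit (A : PackingBoundFunction) (n : ℕ)
    (C : Set (EuclideanSpace ℝ (Fin n))) (hC : IsCompact C) :
    Filter.Tendsto (fun r : ℝ => A.toFun n (r • C) / r ^ n) Filter.atTop
      (nhds (pbfDensity A n * (volume C).toReal)) := by
  simpa only [hC.isClosed.closure_eq] using
    packingBoundFunction_compact_limit_general A n C hC.isBounded hC.measurableSet
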